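/- Let f and f′ be two smooth cubic forms in four variables over 𝔽₂ whose stabilizers in GL₄(𝔽₂) each have order 720 (equivalently, are each isomorphic to S₆). Then f and f′ are GL₄(𝔽₂)-equivalent: there exists g ∈ GL₄(𝔽₂) with f ∘ g = f′. In other words, the smooth cubic surface over 𝔽₂ with automorphism group of order 720 is unique up to isomorphism. -/

import Mathlib

open MvPolynomial

noncomputable section

/-- The field with two elements. -/
abbrev F2 : Type := ZMod 2

/-- An algebraic closure of `F2`. -/
abbrev Kbar : Type := AlgebraicClosure F2

/-- Linear substitution action of a matrix `g` on a polynomial `f`: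
`(act g f)(x) = f (g * x)`, i.e. the variable `X i` is replaced by `∑ j, g i j • X j`. -/
def act (g : Matrix (Fin 4) (Fin 4) F2) (f : MvPolynomial (Fin 4) F2) :
    MvPolynomial (Fin 4) F2 :=
  aeval (fun i => ∑ j, g i j • X j) f

lemma act_one (f : MvPolynomial (Fin 4) F2) : act 1 f = f := by
  have h : (fun i => ∑ j, (1 : Matrix (Fin 4) (Fin 4) F2) i j • (X j : MvPolynomial (Fin 4) F2))
      = X := by
    funext i
    simp [Matrix.one_apply, ite_smul]
  simp [act, h]

lemma act_act (g h : Matrix (Fin 4) (Fin 4) F2) (f : MvPolynomial (Fin 4) F2) :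
    act g (act h f) = act (h * g) f := by
  show (aeval _) ((aeval _) f) = _
  rw [← AlgHom.comp_apply, comp_aeval]
  have key : (fun i => (aeval fun i => ∑ j, g i j • (X j : MvPolynomial (Fin 4) F2))
        (∑ j, h i j • (X j : MvPolynomial (Fin 4) F2)))
      = fun i => ∑ j, (h * g) i j • (X j : MvPolynomial (Fin 4) F2) := by
    funext i
    simp only [map_sum, map_smul, aeval_X, Matrix.mul_apply, Finset.smul_sum, smul_smul,
      Finset.sum_smul]
    rw [Finset.sum_comm]
  rw [key]
  rfl

/-- The stabilizer of a polynomial `f` under the linear-substitution action of `GL₄(𝔽₂)`. -/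
def stab (f : MvPolynomial (Fin 4) F2) : Subgroup (GL (Fin 4) F2) where
  carrier := {g | act (g : Matrix (Fin 4) (Fin 4) F2) f = f}
  one_mem' := by simpa using act_one f
  mul_mem' := by
    intro a b ha hb
    simp only [Set.mem_setOf_eq] at *
    have : act ((↑(a * b) : Matrix (Fin 4) (Fin 4) F2)) f = act ↑b (act ↑a f) := by
      rw [act_act]; rfl
    rw [this, ha, hb]
  inv_mem' := by
    intro a ha
    simp only [Set.mem_setOf_eq] at *
    have h2 := congrArg (act ((↑(a⁻¹) : Matrix (Fin 4) (Fin 4) F2))) ha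
    rw [act_act] at h2
    rw [Units.mul_inv, act_one] at h2
    exact h2.symm

/-- A smooth cubic form over `𝔽₂`: homogeneous of degree `3`, such that over an algebraic
closure the only common zero of `f` and its four partial derivatives is the origin. -/
def IsSmoothCubic (f : MvPolynomial (Fin 4) F2) : Prop :=
  f.IsHomogeneous 3 ∧
    ∀ v : Fin 4 → Kbar,
      eval v (map (algebraMap F2 Kbar) f) = 0 →
      (∀ i : Fin 4, eval v (map (algebraMap F2 Kbar) (pderiv i f)) = 0) →
      v = 0

/-- The cubic form `x²t + y²z + yz² + xt²`. -/
def c0 : MvPolynomial (Fin 4) F2 :=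
  X 0 ^ 2 * X 3 + X 1 ^ 2 * X 2 + X 1 * X 2 ^ 2 + X 0 * X 3 ^ 2


/-- The cubic `∑ Mᵢⱼ Xᵢ² Xⱼ`. -/
def Fc (M : Matrix (Fin 4) (Fin 4) F2) : MvPolynomial (Fin 4) F2 :=
  ∑ i, ∑ j, M i j • (X i ^ 2 * X j)

/-- The alternating matrix with given upper entries. -/
def alt (a b c d e p : F2) : Matrix (Fin 4) (Fin 4) F2 :=
  !![0, a, b, c; a, 0, d, e; b, d, 0, p; c, e, p, 0]

lemma f2sq (a : F2) : a ^ 2 = a := by revert a; decide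

lemma act_Fc (g M : Matrix (Fin 4) (Fin 4) F2) : act g (Fc M) = Fc (g.transpose * M * g) := by
  have sq : ∀ i, (∑ j, g i j • (X j : MvPolynomial (Fin 4) F2)) ^ 2 = ∑ j, g i j • X j ^ 2 := by
    intro i
    rw [sum_pow_char (p := 2)]
    simp [smul_pow, f2sq]
  simp only [act, Fc, map_sum, map_smul, map_mul, map_pow, aeval_X, sq]
  simp only [Finset.sum_mul_sum, Matrix.mul_apply, Finset.sum_mul, Finset.sum_smul,
    Matrix.transpose_apply, Finset.smul_sum, smul_mul_smul_comm, smul_smul]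
  simp only [Fin.sum_univ_four, Algebra.smul_def, map_mul]
  ring

lemma alt_key : ∀ a b c d e p : F2,
    (∀ v0 v1 v2 v3 : F2, a * v1 + b * v2 + c * v3 = 0 → a * v0 + d * v2 + e * v3 = 0 →
      b * v0 + d * v1 + p * v3 = 0 → c * v0 + e * v1 + p * v2 = 0 →
        v0 = 0 ∧ v1 = 0 ∧ v2 = 0 ∧ v3 = 0) → a * p + b * e + c * d = 1 := by
  decide

lemma alt_std (a b c d e p : F2) (h : a * p + b * e + c * d = 1) :
    ∃ g : Matrix (Fin 4) (Fin 4) F2, g.transpose * alt a b c d e p * g = alt 0 0 1 1 0 0 := by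
  have two : ∀ x : F2, x + x = 0 := by decide
  have hc : c = 1 ∨ b = 1 ∨ a = 1 := by revert a b c d e p; decide
  rcases hc with rfl | rfl | rfl
  · refine ⟨!![1, e, p, 0; 0, 1, 0, 0; 0, 0, 1, 0; 0, a, b, 1], ?_⟩
    revert a b d e p; decide
  · refine ⟨!![1, d, p, 0; 0, 1, 0, 0; 0, a, c, 1; 0, 0, 1, 0], ?_⟩
    revert a c d e p; decide
  · refine ⟨!![1, d, e, 0; 0, b, c, 1; 0, 1, 0, 0; 0, 0, 1, 0], ?_⟩
    revert b c d e p; decide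

lemma alt_equiv (a b c d e p : F2) (hs : IsSmoothCubic (Fc (alt a b c d e p))) :
    ∃ g : GL (Fin 4) F2, act (g : Matrix (Fin 4) (Fin 4) F2) (Fc (alt a b c d e p))
      = Fc (alt 0 0 1 1 0 0) := by
  have h1 : a * p + b * e + c * d = 1 := by
    apply alt_key
    intro v0 v1 v2 v3 h0 h1 h2 h3
    have two : (2 : F2) = 0 := by decide
    have := hs.2 (algebraMap F2 Kbar ∘ ![v0, v1, v2, v3]) ?_ ?_
    · have hh : ∀ i, ![v0, v1, v2, v3] i = 0 := fun i => by
        have := congrFun this i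
        simpa using this
      exact ⟨hh 0, hh 1, hh 2, hh 3⟩
    · rw [eval_map, ← aeval_def, aeval_algebraMap_apply]
      have : aeval ![v0, v1, v2, v3] (Fc (alt a b c d e p)) = 0 := by
        simp only [Fc, alt, Fin.sum_univ_four]
        simp [f2sq]
        linear_combination v0 * h0 + v1 * h1 + v2 * h2 + v3 * h3
      rw [this, map_zero]
    · intro i
      rw [eval_map, ← aeval_def, aeval_algebraMap_apply]
      have : aeval ![v0, v1, v2, v3] (pderiv i (Fc (alt a b c d e p))) = 0 := by
        have two' : ((1:F2)+1) = 0 := by decide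
        fin_cases i <;> simp [Fc, alt, Fin.sum_univ_four, pderiv_X, f2sq, Pi.single_apply, two, two']
        · linear_combination h0
        · linear_combination h1
        · linear_combination h2
        · linear_combination h3
      rw [this, map_zero]
  obtain ⟨g, hg⟩ := alt_std a b c d e p h1
  have hdet : IsUnit g := by
    have hJ : alt 0 0 1 1 0 0 * alt 0 0 1 1 0 0 = 1 := by decide
    nth_rewrite 2 [← hg] at hJ
    rw [← mul_assoc] at hJ
    exact (Matrix.isUnit_iff_isUnit_det _).2 (Matrix.isUnit_det_of_left_inverse hJ)
  obtain ⟨u, rfl⟩ := hdet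
  exact ⟨u, by rw [act_Fc, hg]⟩

lemma cubic_repr (f : MvPolynomial (Fin 4) F2) (hf : f.IsHomogeneous 3) :
    ∃ T : Fin 4 → Fin 4 → Fin 4 → F2, f = ∑ i, ∑ j, ∑ k, T i j k • (X i * X j * X k) := by
  rw [f.as_sum]
  have hs : ∀ d ∈ f.support, d.degree = 3 := fun d hd => by
    have := hf (mem_support_iff.1 hd)
    rwa [Finsupp.degree_eq_weight_one]
  revert hs
  induction f.support using Finset.induction_on with
  | empty => intro _; exact ⟨0, by simp⟩
  | insert d s hd ih =>
    intro hs
    obtain ⟨T, hT⟩ := ih fun d hd => hs d (Finset.mem_insert_of_mem hd)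
    have h3 := hs d (Finset.mem_insert_self _ _)
    have : (Finsupp.toMultiset d).card = 3 := by
      rw [Finsupp.card_toMultiset]; exact h3
    obtain ⟨i, j, k, hm⟩ := Multiset.card_eq_three.1 this
    have hd' : d = Finsupp.single i 1 + Finsupp.single j 1 + Finsupp.single k 1 := by
      apply (Multiset.toFinsupp.symm.injective)
      change Finsupp.toMultiset _ = Finsupp.toMultiset _
      rw [hm]
      simp only [map_add, Finsupp.toMultiset_single, one_smul]
      rfl
    refine ⟨T + Pi.single i (Pi.single j (Pi.single k (coeff d f))), ?_⟩
    rw [Finset.sum_insert hd, hT]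
    simp only [Pi.add_apply, add_smul, Finset.sum_add_distrib]
    rw [add_comm]
    congr 1
    rw [Finset.sum_eq_single i, Finset.sum_eq_single j, Finset.sum_eq_single k]
    · simp only [Pi.single_eq_same]
      conv_lhs => rw [hd']
      simp only [X, monomial_mul, smul_monomial]
      simp [← hd']
    all_goals first
      | (intro l _ hl; simp [Pi.single_eq_of_ne hl])
      | (intro hl; exact absurd (Finset.mem_univ _) hl)

lemma const_alt (f : MvPolynomial (Fin 4) F2) (hf : f.IsHomogeneous 3) (c : F2)
    (hc : ∀ v : Fin 4 → F2, v ≠ 0 → eval v f = c) :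
    ∃ a b c d e p, f = Fc (alt a b c d e p) := by
  have two : (2 : F2) = 0 := by decide
  obtain ⟨t000, t001, t002, t003, t011, t012, t013, t022, t023, t033, t111, t112, t113, t122, t123, t133, t222, t223, t233, t333, hq⟩ : ∃ t000 t001 t002 t003 t011 t012 t013 t022 t023 t033 t111 t112 t113 t122 t123 t133 t222 t223 t233 t333 : F2,
      f = C t000 * (X 0 * X 0 * X 0)
        + C t001 * (X 0 * X 0 * X 1)
        + C t002 * (X 0 * X 0 * X 2)
        + C t003 * (X 0 * X 0 * X 3)
        + C t011 * (X 0 * X 1 * X 1)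
        + C t012 * (X 0 * X 1 * X 2)
        + C t013 * (X 0 * X 1 * X 3)
        + C t022 * (X 0 * X 2 * X 2)
        + C t023 * (X 0 * X 2 * X 3)
        + C t033 * (X 0 * X 3 * X 3)
        + C t111 * (X 1 * X 1 * X 1)
        + C t112 * (X 1 * X 1 * X 2)
        + C t113 * (X 1 * X 1 * X 3)
        + C t122 * (X 1 * X 2 * X 2)
        + C t123 * (X 1 * X 2 * X 3)
        + C t133 * (X 1 * X 3 * X 3)
        + C t222 * (X 2 * X 2 * X 2)
        + C t223 * (X 2 * X 2 * X 3)
        + C t233 * (X 2 * X 3 * X 3)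
        + C t333 * (X 3 * X 3 * X 3) := by
    obtain ⟨T, rfl⟩ := cubic_repr f hf
    refine ⟨T 0 0 0,
      T 0 0 1 + T 0 1 0 + T 1 0 0,
      T 0 0 2 + T 0 2 0 + T 2 0 0,
      T 0 0 3 + T 0 3 0 + T 3 0 0,
      T 0 1 1 + T 1 0 1 + T 1 1 0,
      T 0 1 2 + T 0 2 1 + T 1 0 2 + T 1 2 0 + T 2 0 1 + T 2 1 0,
      T 0 1 3 + T 0 3 1 + T 1 0 3 + T 1 3 0 + T 3 0 1 + T 3 1 0,
      T 0 2 2 + T 2 0 2 + T 2 2 0,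
      T 0 2 3 + T 0 3 2 + T 2 0 3 + T 2 3 0 + T 3 0 2 + T 3 2 0,
      T 0 3 3 + T 3 0 3 + T 3 3 0,
      T 1 1 1,
      T 1 1 2 + T 1 2 1 + T 2 1 1,
      T 1 1 3 + T 1 3 1 + T 3 1 1,
      T 1 2 2 + T 2 1 2 + T 2 2 1,
      T 1 2 3 + T 1 3 2 + T 2 1 3 + T 2 3 1 + T 3 1 2 + T 3 2 1,
      T 1 3 3 + T 3 1 3 + T 3 3 1,
      T 2 2 2,
      T 2 2 3 + T 2 3 2 + T 3 2 2,
      T 2 3 3 + T 3 2 3 + T 3 3 2,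
      T 3 3 3, ?_⟩
    simp only [Fin.sum_univ_four, smul_eq_C_mul, C_add]
    ring
  have h0001 : t333 = c := by
    rw [← hc ![0, 0, 0, 1] (by decide), hq]; simp
  have h0010 : t222 = c := by
    rw [← hc ![0, 0, 1, 0] (by decide), hq]; simp
  have h0011 : t222 + t223 + t233 + t333 = c := by
    rw [← hc ![0, 0, 1, 1] (by decide), hq]; simp
  have h0100 : t111 = c := by
    rw [← hc ![0, 1, 0, 0] (by decide), hq]; simp
  have h0101 : t111 + t113 + t133 + t333 = c := by
    rw [← hc ![0, 1, 0, 1] (by decide), hq]; simp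
  have h0110 : t111 + t112 + t122 + t222 = c := by
    rw [← hc ![0, 1, 1, 0] (by decide), hq]; simp
  have h0111 : t111 + t112 + t113 + t122 + t123 + t133 + t222 + t223 + t233 + t333 = c := by
    rw [← hc ![0, 1, 1, 1] (by decide), hq]; simp
  have h1000 : t000 = c := by
    rw [← hc ![1, 0, 0, 0] (by decide), hq]; simp
  have h1001 : t000 + t003 + t033 + t333 = c := by
    rw [← hc ![1, 0, 0, 1] (by decide), hq]; simp
  have h1010 : t000 + t002 + t022 + t222 = c := by
    rw [← hc ![1, 0, 1, 0] (by decide), hq]; simp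
  have h1011 : t000 + t002 + t003 + t022 + t023 + t033 + t222 + t223 + t233 + t333 = c := by
    rw [← hc ![1, 0, 1, 1] (by decide), hq]; simp
  have h1100 : t000 + t001 + t011 + t111 = c := by
    rw [← hc ![1, 1, 0, 0] (by decide), hq]; simp
  have h1101 : t000 + t001 + t003 + t011 + t013 + t033 + t111 + t113 + t133 + t333 = c := by
    rw [← hc ![1, 1, 0, 1] (by decide), hq]; simp
  have h1110 : t000 + t001 + t002 + t011 + t012 + t022 + t111 + t112 + t122 + t222 = c := by
    rw [← hc ![1, 1, 1, 0] (by decide), hq]; simp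
  have h1111 : t000 + t001 + t002 + t003 + t011 + t012 + t013 + t022 + t023 + t033 + t111 + t112 + t113 + t122 + t123 + t133 + t222 + t223 + t233 + t333 = c := by
    rw [← hc ![1, 1, 1, 1] (by decide), hq]; simp
  have a0 : t000 = c := h1000
  have a1 : t111 = c := h0100
  have a2 : t222 = c := h0010
  have a3 : t333 = c := h0001
  have b01 : t011 = t001 + c := by
    linear_combination h1100 - a0 - a1 - (t001 + c) * two
  have b02 : t022 = t002 + c := by
    linear_combination h1010 - a0 - a2 - (t002 + c) * two
  have b03 : t033 = t003 + c := by
    linear_combination h1001 - a0 - a3 - (t003 + c) * two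
  have b12 : t122 = t112 + c := by
    linear_combination h0110 - a1 - a2 - (t112 + c) * two
  have b13 : t133 = t113 + c := by
    linear_combination h0101 - a1 - a3 - (t113 + c) * two
  have b23 : t233 = t223 + c := by
    linear_combination h0011 - a2 - a3 - (t223 + c) * two
  have e012 : t012 = c := by
    linear_combination h1110 - a0 - a1 - a2 - b01 - b02 - b12 - (t001 + t002 + t112 + 3 * c) * two
  have e013 : t013 = c := by
    linear_combination h1101 - a0 - a1 - a3 - b01 - b03 - b13 - (t001 + t003 + t113 + 3 * c) * two
  have e023 : t023 = c := by
    linear_combination h1011 - a0 - a2 - a3 - b02 - b03 - b23 - (t002 + t003 + t223 + 3 * c) * two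
  have e123 : t123 = c := by
    linear_combination h0111 - a1 - a2 - a3 - b12 - b13 - b23 - (t112 + t113 + t223 + 3 * c) * two
  have hc0 : c = 0 := by
    linear_combination h1111 - a0 - a1 - a2 - a3 - b01 - b02 - b03 - b12 - b13 - b23 - e012 - e013 - e023 - e123 - (t001 + t002 + t003 + t112 + t113 + t223 + 6 * c) * two
  refine ⟨t001, t002, t003, t112, t113, t223, ?_⟩
  rw [hq, a0, a1, a2, a3, b01, b02, b03, b12, b13, b23, e012, e013, e023, e123, hc0]
  simp [Fc, alt, Fin.sum_univ_four, smul_eq_C_mul]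
  ring

lemma exists_functional : ∀ x0 x1 x2 x3 y0 y1 y2 y3 : F2,
    (x0 ≠ 0 ∨ x1 ≠ 0 ∨ x2 ≠ 0 ∨ x3 ≠ 0) → (y0 ≠ 0 ∨ y1 ≠ 0 ∨ y2 ≠ 0 ∨ y3 ≠ 0) →
    ∃ g0 g1 g2 g3 : F2, g0 * x0 + g1 * x1 + g2 * x2 + g3 * x3 = 1 ∧
      g0 * y0 + g1 * y1 + g2 * y2 + g3 * y3 = 1 := by
  decide +kernel

lemma GL_trans (x y : Fin 4 → F2) (hx : x ≠ 0) (hy : y ≠ 0) :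
    ∃ g : GL (Fin 4) F2, g.1.mulVec x = y := by
  have nz : ∀ z : Fin 4 → F2, z ≠ 0 → (z 0 ≠ 0 ∨ z 1 ≠ 0 ∨ z 2 ≠ 0 ∨ z 3 ≠ 0) := by
    intro z hz
    by_contra! hh
    apply hz
    funext i
    fin_cases i
    exacts [hh.1, hh.2.1, hh.2.2.1, hh.2.2.2]
  obtain ⟨g0, g1, g2, g3, h1, h2⟩ := exists_functional _ _ _ _ _ _ _ _ (nz x hx) (nz y hy)
  have k1 : ![g0, g1, g2, g3] ⬝ᵥ x = 1 := by
    simpa [dotProduct, Fin.sum_univ_four] using h1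
  have k2 : ![g0, g1, g2, g3] ⬝ᵥ y = 1 := by
    simpa [dotProduct, Fin.sum_univ_four] using h2
  generalize ![g0, g1, g2, g3] = G at k1 k2
  have hA : (1 + Matrix.vecMulVec (y - x) G) * (1 + Matrix.vecMulVec (y - x) G) = 1 := by
    have : G ⬝ᵥ (y - x) = 0 := by rw [dotProduct_sub, k1, k2, sub_self]
    rw [mul_add, add_mul, add_mul, Matrix.vecMulVec_mul_vecMulVec, this]
    have h2 : ∀ M : Matrix (Fin 4) (Fin 4) F2, M + M = 0 := fun M => CharTwo.add_self_eq_zero M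
    simp [mul_add, add_mul, add_assoc, h2]
  refine ⟨⟨_, _, hA, hA⟩, ?_⟩
  simp [Matrix.add_mulVec, Matrix.vecMulVec_mulVec, k1]

lemma card_GL4 : Nat.card (GL (Fin 4) F2) = 20160 := by
  have := Matrix.card_GL_field (𝔽 := F2) 4
  rw [this]
  simp [Fin.prod_univ_four, ZMod.card]

lemma orbit_GL (v : Fin 4 → F2) (hv : v ≠ 0) :
    MulAction.orbit (GL (Fin 4) F2) v = {w | w ≠ 0} := by
  ext w
  constructor
  · rintro ⟨g, rfl⟩
    exact (smul_ne_zero_iff_ne g).2 hv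
  · intro hw
    obtain ⟨g, hg⟩ := GL_trans v w hv hw
    exact ⟨g, hg⟩

lemma card_nz : Nat.card {w : Fin 4 → F2 | w ≠ 0} = 15 := by
  rw [Nat.card_eq_fintype_card]
  decide

lemma card_stab_GL (v : Fin 4 → F2) (hv : v ≠ 0) :
    Nat.card (MulAction.stabilizer (GL (Fin 4) F2) v) = 1344 := by
  have h := Nat.card_congr (MulAction.orbitProdStabilizerEquivGroup (GL (Fin 4) F2) v)
  rw [Nat.card_prod, card_GL4, orbit_GL v hv, card_nz] at h
  omega

lemma stab_trans (G : Subgroup (GL (Fin 4) F2)) (hG : Nat.card G = 720)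
    (v w : Fin 4 → F2) (hv : v ≠ 0) (hw : w ≠ 0) : ∃ g ∈ G, g.1.mulVec v = w := by
  have h := Nat.card_congr (MulAction.orbitProdStabilizerEquivGroup G v)
  rw [Nat.card_prod, hG] at h
  have hd : Nat.card (MulAction.stabilizer G v) ∣ 1344 := by
    rw [← card_stab_GL v hv]
    have e : MulAction.stabilizer G v = (MulAction.stabilizer (GL (Fin 4) F2) v).subgroupOf G := by
      ext g; rfl
    rw [e]
    exact Subgroup.card_comap_dvd_of_injective _ _ G.subtype_injective
  have hd2 : Nat.card (MulAction.stabilizer G v) ∣ 48 := by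
    have := Nat.dvd_gcd hd (Dvd.intro_left _ h)
    simpa using this
  have hle := Nat.le_of_dvd (by norm_num) hd2
  have hsub : MulAction.orbit G v ⊆ {w | w ≠ 0} := by
    rintro w ⟨g, rfl⟩
    exact (smul_ne_zero_iff_ne g.1).2 hv
  have heq : MulAction.orbit G v = {w | w ≠ 0} := by
    apply Set.eq_of_subset_of_ncard_le hsub
    rw [← Nat.card_coe_set_eq, ← Nat.card_coe_set_eq, card_nz]
    nlinarith
  have : w ∈ MulAction.orbit G v := by rw [heq]; exact hw
  obtain ⟨g, hg⟩ := this
  exact ⟨g.1, g.2, hg⟩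

lemma eval_act (g : Matrix (Fin 4) (Fin 4) F2) (f : MvPolynomial (Fin 4) F2) (v : Fin 4 → F2) :
    eval v (act g f) = eval (g.mulVec v) f := by
  rw [act, ← coe_aeval_eq_eval, ← coe_aeval_eq_eval, RingHom.coe_coe, RingHom.coe_coe,
    ← AlgHom.comp_apply, comp_aeval]
  congr 2
  funext i
  simp [Matrix.mulVec, dotProduct]

lemma equiv_std (f : MvPolynomial (Fin 4) F2) (hf : IsSmoothCubic f)
    (h : Nat.card (stab f) = 720) :
    ∃ g : GL (Fin 4) F2, act (g : Matrix (Fin 4) (Fin 4) F2) f = Fc (alt 0 0 1 1 0 0) := by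
  obtain ⟨a, b, c, d, e, p, rfl⟩ := const_alt f hf.1 (eval ![1, 0, 0, 0] f) (by
    intro v hv
    obtain ⟨g, hg, rfl⟩ := stab_trans _ h ![1, 0, 0, 0] v (by decide) hv
    rw [← eval_act]
    exact congrArg _ hg)
  exact alt_equiv a b c d e p hf

/-- any two smooth cubic forms over `𝔽₂` whose stabilizers in `GL₄(𝔽₂)` have
order `720` are `GL₄(𝔽₂)`-equivalent: the smooth cubic surface over `𝔽₂` with automorphism
group of order `720` is unique up to isomorphism. -/
theorem uniqueness_of_720_cubic (f f' : MvPolynomial (Fin 4) F2)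
    (hf : IsSmoothCubic f) (hf' : IsSmoothCubic f')
    (h : Nat.card (stab f) = 720) (h' : Nat.card (stab f') = 720) :
    ∃ g : GL (Fin 4) F2, act (g : Matrix (Fin 4) (Fin 4) F2) f = f' := by
  obtain ⟨g, hg⟩ := equiv_std f hf h
  obtain ⟨g', hg'⟩ := equiv_std f' hf' h'
  refine ⟨g * g'⁻¹, ?_⟩
  rw [Units.val_mul, ← act_act, hg, ← hg', act_act, Units.mul_inv, act_one]
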